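/- Let M be a II₁ factor with trace τ and let a, b ∈ M be self-adjoint. Then a ≺ b (spectral majorization) if and only if τ(f(a)) ≤ τ(f(b)) for every convex function f : J → ℝ, where J is an open interval containing σ(a) ∪ σ(b). -/

import Mathlib

open scoped ComplexOrder

/- We model a II₁ factor abstractly: a unital C*-algebra `A` (with its canonical order)
together with a normalized faithful tracial state `τ` which has trivial center and
projections of every trace in `[0,1]`.  (Normality of `τ` and of the subalgebras is
implicit in the properties we record, e.g. right-continuity of spectral distributions.)
On bounded sets the σ-strong operator topology of a II₁ factor coincides with the
topology of the trace norm `‖x‖₁ = τ(|x|)`; accordingly σ-strong closures of bounded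
sets are formalized as `‖·‖₁`-closures. -/

variable {A : Type*} [CStarAlgebra A] [PartialOrder A] [StarOrderedRing A]

/-- A normalized faithful tracial state on a finite von Neumann algebra. -/
structure IsFiniteTrace (τ : A →ₗ[ℂ] ℂ) : Prop where
  tracial : ∀ x y : A, τ (x * y) = τ (y * x)
  pos : ∀ x : A, 0 ≤ x → 0 ≤ τ x
  faithful : ∀ x : A, 0 ≤ x → τ x = 0 → x = 0
  normalized : τ 1 = 1

/-- The trace of a II₁ factor: a normalized faithful tracial state on an algebra with
trivial center and with projections of every trace `t ∈ [0,1]`. -/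
structure IsII1Trace (τ : A →ₗ[ℂ] ℂ) extends IsFiniteTrace τ : Prop where
  factor : ∀ z : A, (∀ x : A, z * x = x * z) → ∃ c : ℂ, z = c • (1 : A)
  proj : ∀ t ∈ Set.Icc (0:ℝ) 1, ∃ p : A, IsSelfAdjoint p ∧ p * p = p ∧ τ p = (t : ℂ)

/-- `e s` is the spectral projection `p^a(-∞, s]` of the selfadjoint element `a`:
an increasing right-continuous (in trace) family of projections commuting with `a`,
below which `a ≤ s` and above which `a ≥ s`. -/
structure IsSpectralResolution (τ : A →ₗ[ℂ] ℂ) (a : A) (e : ℝ → A) : Prop where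
  selfAdjoint : ∀ s, IsSelfAdjoint (e s)
  idem : ∀ s, e s * e s = e s
  mono : Monotone e
  comm : ∀ s, a * e s = e s * a
  below : ∀ s : ℝ, a * e s ≤ (s : ℂ) • e s
  above : ∀ s : ℝ, (s : ℂ) • ((1 : A) - e s) ≤ a * ((1 : A) - e s)
  bot : ∀ s, s < -‖a‖ → e s = 0
  top : ∀ s, ‖a‖ ≤ s → e s = 1
  rightCont : ∀ s, ContinuousWithinAt (fun u => (τ (e u)).re) (Set.Ici s) s

/-- The spectral scale `λ_a(t) = min {s ∈ ℝ : τ(p^a(s,∞)) ≤ t}`, expressed through the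
resolution `e s = p^a(-∞,s]`, so that `τ(p^a(s,∞)) = 1 - τ(e s)`. -/
noncomputable def spectralScale (τ : A →ₗ[ℂ] ℂ) (e : ℝ → A) : ℝ → ℝ :=
  fun t => sInf {s : ℝ | 1 - (τ (e s)).re ≤ t}

/-- Spectral majorization `a ≺ b`: `τ(a) = τ(b)` and `∫₀ˢ λ_a ≤ ∫₀ˢ λ_b` for `s ∈ [0,1)`. -/
def IsSpecMajorizedBy (τ : A →ₗ[ℂ] ℂ) (a b : A) : Prop :=
  τ a = τ b ∧
    ∃ ea eb : ℝ → A, IsSpectralResolution τ a ea ∧ IsSpectralResolution τ b eb ∧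
      ∀ s ∈ Set.Ico (0:ℝ) 1,
        ∫ t in (0:ℝ)..s, spectralScale τ ea t ≤ ∫ t in (0:ℝ)..s, spectralScale τ eb t

/-- The trace norm `‖x‖₁ = τ(|x|)` (defined via continuous functional calculus). -/
noncomputable def traceNorm (τ : A →ₗ[ℂ] ℂ) (x : A) : ℝ :=
  (τ (cfc (fun r : ℝ => |r|) x)).re

/-- The trace-preserving conditional expectation onto a subalgebra `N`. -/
structure IsCondExp (τ : A →ₗ[ℂ] ℂ) (N : StarSubalgebra ℂ A) (E : A →ₗ[ℂ] A) : Prop where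
  mem : ∀ x : A, E x ∈ N
  fix : ∀ x ∈ N, E x = x
  pos : ∀ x : A, 0 ≤ x → 0 ≤ E x
  star_map : ∀ x : A, E (star x) = star (E x)
  trace : ∀ x : A, τ (E x) = τ x
  bimod : ∀ n ∈ N, ∀ x : A, E (n * x) = n * E x ∧ E (x * n) = E x * n

/-- The unitary orbit `U_M(b) = {u b u* : u unitary}`. -/
def unitaryOrbit (b : A) : Set A := {x | ∃ u ∈ unitary A, x = u * b * star u}

/-- `Ω_N(b)`: the selfadjoint elements of `N` spectrally majorized by `b`. -/
def Omega (τ : A →ₗ[ℂ] ℂ) (N : StarSubalgebra ℂ A) (b : A) : Set A :=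
  {a | a ∈ N ∧ IsSelfAdjoint a ∧ IsSpecMajorizedBy τ a b}

/-- The closure of a set in the trace-norm (`‖·‖₁`) topology; for bounded sets this is
the σ-strong closure. -/
def l1Closure (τ : A →ₗ[ℂ] ℂ) (S : Set A) : Set A :=
  {x | ∀ ε > (0:ℝ), ∃ y ∈ S, traceNorm τ (x - y) < ε}

/-- A diffuse von Neumann subalgebra: one with no minimal projections, i.e. every
nonzero projection strictly dominates a nonzero projection. -/
def IsDiffuse (N : StarSubalgebra ℂ A) : Prop :=
  ∀ p ∈ N, IsSelfAdjoint p → p * p = p → p ≠ 0 →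
    ∃ q ∈ N, IsSelfAdjoint q ∧ q * q = q ∧ q * p = q ∧ q ≠ 0 ∧ q ≠ p

/-- An abelian subalgebra. -/
def IsAbelian (N : StarSubalgebra ℂ A) : Prop := ∀ x ∈ N, ∀ y ∈ N, x * y = y * x

/-!
Both sides are conditions on the hinges `x ↦ (x - r)⁺`. A convex function is, uniformly on the
compact set of the two spectra, a limit of affine functions plus nonnegative combinations of
hinges, so the trace inequalities amount to `τ a = τ b` and `τ((a - r)⁺) ≤ τ((b - r)⁺)` for all
`r`. For a decreasing `λ` the integral `∫ (λ - r)⁺` is the maximum over `s` of `∫₀ˢ λ - r s`, so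
majorization of spectral scales is domination of all `∫ (λ - r)⁺`. Finally
`τ((a - r)⁺) = ∫ (λ_a - r)⁺`: as functions of `r` both sides vanish at `‖a‖` and have
`-(1 - τ(e r))` as a subgradient at every `r`, and two such functions differ by a constant.
-/

section RealAnalysis

open Set MeasureTheory Filter Topology

-- Telescoping over `n + 1` equal steps gains a factor `1 / (n + 1)`.
theorem le_of_forall_sub_le_mul_sub {D F : ℝ → ℝ}
    (h : ∀ x y, D y - D x ≤ (y - x) * (F y - F x)) (x y : ℝ) : D y ≤ D x := by
  have hmesh (n : ℕ) : D y - D x ≤ (y - x) * (F y - F x) * (1 / ((n : ℝ) + 1)) := by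
    set z : ℕ → ℝ := fun k => x + k * ((y - x) / (n + 1)) with hz
    have hz0 : z 0 = x := by simp [hz]
    have hzn : z (n + 1) = y := by simp only [hz]; push_cast; field_simp; ring
    calc D y - D x
        = ∑ k ∈ Finset.range (n + 1), (D (z (k + 1)) - D (z k)) := by
          rw [Finset.sum_range_sub (fun k => D (z k)), hz0, hzn]
      _ ≤ ∑ k ∈ Finset.range (n + 1), (y - x) / (n + 1) * (F (z (k + 1)) - F (z k)) :=
          Finset.sum_le_sum fun k _ => (h _ _).trans_eq <| by
            congr 1; simp only [hz]; push_cast; ring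
      _ = (y - x) * (F y - F x) * (1 / ((n : ℝ) + 1)) := by
          rw [← Finset.mul_sum, Finset.sum_range_sub (fun k => F (z k)), hz0, hzn]; ring
  have hlim : Tendsto (fun n : ℕ => (y - x) * (F y - F x) * (1 / ((n : ℝ) + 1))) atTop (𝓝 0) := by
    simpa using tendsto_one_div_add_atTop_nhds_zero_nat.const_mul ((y - x) * (F y - F x))
  linarith [ge_of_tendsto' hlim hmesh]

theorem eq_of_forall_sub_le_mul_sub {D F : ℝ → ℝ}
    (h : ∀ x y, D y - D x ≤ (y - x) * (F y - F x)) (x y : ℝ) : D x = D y :=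
  le_antisymm (le_of_forall_sub_le_mul_sub h y x) (le_of_forall_sub_le_mul_sub h x y)

section Secant

/-- The line through the points of the graph of `f` above `u` and `v`; for `u = v` the junk slope
`0` makes it horizontal. -/
noncomputable def secantLine (f : ℝ → ℝ) (u v x : ℝ) : ℝ := f u + slope f u v * (x - u)

theorem secantLine_right (f : ℝ → ℝ) (u v : ℝ) : secantLine f u v v = f v := by
  have := sub_smul_slope_vadd f u v
  rw [smul_eq_mul, vadd_eq_add] at this
  rw [secantLine]
  linarith

theorem abs_secantLine_sub_le {f : ℝ → ℝ} {u v x w ε : ℝ} (hx : x ∈ Icc u v)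
    (hu : |f u - w| ≤ ε) (hv : |f v - w| ≤ ε) : |secantLine f u v x - w| ≤ ε := by
  rw [← secantLine_right f u v] at hv
  simp only [secantLine, abs_le] at hu hv ⊢
  rcases le_total 0 (slope f u v) with hσ | hσ <;>
    constructor <;> nlinarith [hx.1, hx.2]

/-- Convex piecewise affine functions on the line with finitely many breakpoints, generated from
affine functions by adding nonnegative multiples of the hinges `x ↦ (x - r)⁺`. -/
inductive IsConvexPolygonal : (ℝ → ℝ) → Prop
  | affine (p q : ℝ) : IsConvexPolygonal fun x => p + q * x
  | add_hinge {g : ℝ → ℝ} (hg : IsConvexPolygonal g) {k : ℝ} (hk : 0 ≤ k) (r : ℝ) :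
      IsConvexPolygonal fun x => g x + k * (x - r)⁺

theorem continuous_hinge (r : ℝ) : Continuous fun x : ℝ => (x - r)⁺ :=
  continuous_posPart.comp (continuous_sub_right r)

theorem convexOn_hinge (r : ℝ) : ConvexOn ℝ univ fun x : ℝ => (x - r)⁺ :=
  ((convexOn_id convex_univ).add_const (-r)).sup (convexOn_const 0 convex_univ)

theorem IsConvexPolygonal.continuous {g : ℝ → ℝ} (hg : IsConvexPolygonal g) : Continuous g := by
  induction hg with
  | affine p q => fun_prop
  | add_hinge _ _ r ih => exact ih.add ((continuous_hinge r).const_mul _)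

theorem exists_isConvexPolygonal_eq_secantLine {s : Set ℝ} {f : ℝ → ℝ} (hf : ConvexOn ℝ s f)
    {y : ℕ → ℝ} (hy : StrictMono y) (n : ℕ) (hmem : ∀ k ≤ n + 1, y k ∈ s) :
    ∃ g, IsConvexPolygonal g ∧ (∀ x, y n ≤ x → g x = secantLine f (y n) (y (n + 1)) x) ∧
      ∀ x ∈ Icc (y 0) (y (n + 1)), ∃ k ≤ n, x ∈ Icc (y k) (y (k + 1)) ∧
        g x = secantLine f (y k) (y (k + 1)) x := by
  induction n with
  | zero =>
    have heq (x : ℝ) : f (y 0) - slope f (y 0) (y 1) * y 0 + slope f (y 0) (y 1) * x =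
        secantLine f (y 0) (y 1) x := by rw [secantLine]; ring
    exact ⟨_, .affine _ _, fun x _ => heq x, fun x hx => ⟨0, le_rfl, hx, heq x⟩⟩
  | succ n ih =>
    obtain ⟨g, hg, hlast, hsec⟩ := ih fun k hk => hmem k (by omega)
    set σ := slope f (y n) (y (n + 1)) with hσ
    set σ' := slope f (y (n + 1)) (y (n + 2)) with hσ'
    have hσσ' : σ ≤ σ' := by
      rw [hσ, hσ', slope_def_field, slope_def_field]
      exact hf.slope_mono_adjacent (hmem n (by omega)) (hmem (n + 2) le_rfl)
        (hy n.lt_succ_self) (hy (n + 1).lt_succ_self)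
    have hright (x : ℝ) (hx : y (n + 1) ≤ x) : g x + (σ' - σ) * (x - y (n + 1))⁺ =
        secantLine f (y (n + 1)) (y (n + 2)) x := by
      have hnode := secantLine_right f (y n) (y (n + 1))
      rw [posPart_of_nonneg (sub_nonneg.2 hx), hlast x ((hy n.lt_succ_self).le.trans hx)]
      simp only [secantLine, ← hσ, ← hσ'] at hnode ⊢
      linear_combination hnode
    refine ⟨_, hg.add_hinge (sub_nonneg.2 hσσ') (y (n + 1)), hright, fun x hx => ?_⟩
    rcases le_total x (y (n + 1)) with hxn | hxn
    · obtain ⟨k, hk, hxk, hgx⟩ := hsec x ⟨hx.1, hxn⟩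
      refine ⟨k, by omega, hxk, ?_⟩
      rw [posPart_of_nonpos (sub_nonpos.2 hxn), mul_zero, add_zero, hgx]
    · exact ⟨n + 1, le_rfl, ⟨hxn, hx.2⟩, hright x hxn⟩

theorem exists_strictMono_partition {m M δ : ℝ} (hmM : m < M) (hδ : 0 < δ) :
    ∃ (n : ℕ) (y : ℕ → ℝ), StrictMono y ∧ y 0 = m ∧ y (n + 1) = M ∧
      ∀ k, y (k + 1) - y k < δ := by
  obtain ⟨n, hn⟩ := exists_nat_gt ((M - m) / δ)
  have hstep_pos : 0 < (M - m) / (n + 1) := div_pos (sub_pos.2 hmM) (by positivity)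
  have hstep_lt : (M - m) / (n + 1) < δ := by
    rw [div_lt_iff₀ hδ] at hn
    rw [div_lt_iff₀ (by positivity)]
    linarith
  refine ⟨n, fun k => m + k * ((M - m) / (n + 1)), strictMono_nat_of_lt_succ fun k => ?_,
    by simp, by push_cast; field_simp; ring, fun k => ?_⟩ <;>
    push_cast <;> linarith

theorem exists_isConvexPolygonal_approx_Icc {m M : ℝ} {f : ℝ → ℝ}
    (hf : ConvexOn ℝ (Icc m M) f) (hfc : ContinuousOn f (Icc m M)) {ε : ℝ} (hε : 0 < ε) :
    ∃ g, IsConvexPolygonal g ∧ ∀ x ∈ Icc m M, |g x - f x| ≤ ε := by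
  rcases le_or_gt M m with hMm | hmM
  · refine ⟨_, .affine (f m) 0, fun x hx => ?_⟩
    rw [le_antisymm (hx.2.trans hMm) hx.1]
    simpa using hε.le
  obtain ⟨δ, hδ, hδf⟩ := Metric.uniformContinuousOn_iff.1
    (isCompact_Icc.uniformContinuousOn_of_continuous hfc) ε hε
  obtain ⟨n, y, hy, rfl, rfl, hstep⟩ := exists_strictMono_partition hmM hδ
  have hy_mem (k : ℕ) (hk : k ≤ n + 1) : y k ∈ Icc (y 0) (y (n + 1)) :=
    ⟨hy.monotone k.zero_le, hy.monotone hk⟩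
  obtain ⟨g, hg, -, hsec⟩ := exists_isConvexPolygonal_eq_secantLine hf hy n hy_mem
  refine ⟨g, hg, fun x hx => ?_⟩
  obtain ⟨k, hk, hxk, hgx⟩ := hsec x hx
  have hnear (z : ℝ) (hz : z ∈ Icc (y k) (y (k + 1))) (hz_mem : z ∈ Icc (y 0) (y (n + 1))) :
      |f z - f x| ≤ ε :=
    (hδf z hz_mem x hx ((Real.dist_le_of_mem_Icc hz hxk).trans_lt (hstep k))).le
  rw [hgx]
  exact abs_secantLine_sub_le hxk
    (hnear _ (left_mem_Icc.2 (hxk.1.trans hxk.2)) (hy_mem k (by omega)))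
    (hnear _ (right_mem_Icc.2 (hxk.1.trans hxk.2)) (hy_mem (k + 1) (by omega)))

theorem exists_isConvexPolygonal_approx {s K : Set ℝ} {f : ℝ → ℝ} (hf : ConvexOn ℝ s f)
    (hs : IsOpen s) (hK : IsCompact K) (hKs : K ⊆ s) {ε : ℝ} (hε : 0 < ε) :
    ∃ g, IsConvexPolygonal g ∧ ∀ x ∈ K, |g x - f x| ≤ ε := by
  rcases K.eq_empty_or_nonempty with rfl | hKne
  · exact ⟨_, .affine 0 0, by simp⟩
  have hsub : Icc (sInf K) (sSup K) ⊆ s :=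
    hf.1.ordConnected.out (hKs (hK.sInf_mem hKne)) (hKs (hK.sSup_mem hKne))
  obtain ⟨g, hg, hgf⟩ := exists_isConvexPolygonal_approx_Icc (hf.subset hsub (convex_Icc _ _))
    ((hf.continuousOn hs).mono hsub) hε
  exact ⟨g, hg, fun x hx => hgf x (hK.isBounded.subset_Icc_sInf_sSup hx)⟩

end Secant

section Majorization

variable {f g : ℝ → ℝ} {r s T : ℝ}

theorem intervalIntegrable_posPart {μ : Measure ℝ} {u v : ℝ} (hf : IntervalIntegrable f μ u v) :
    IntervalIntegrable (fun t => (f t)⁺) μ u v :=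
  ⟨hf.1.pos_part, hf.2.pos_part⟩

theorem integral_sub_const_eq (hf : IntervalIntegrable f volume 0 s) :
    ∫ t in (0 : ℝ)..s, (f t - r) = (∫ t in (0 : ℝ)..s, f t) - r * s := by
  rw [intervalIntegral.integral_sub hf intervalIntegrable_const]
  simp [mul_comm]

theorem integral_sub_mul_le_integral_posPart (hf : IntervalIntegrable f volume 0 T)
    (hs : s ∈ Icc 0 T) (r : ℝ) :
    (∫ t in (0 : ℝ)..s, f t) - r * s ≤ ∫ t in (0 : ℝ)..T, (f t - r)⁺ := by
  have hfs : IntervalIntegrable f volume 0 s :=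
    hf.mono_set (uIcc_subset_uIcc_left (Icc_subset_uIcc hs))
  calc (∫ t in (0 : ℝ)..s, f t) - r * s
      = ∫ t in (0 : ℝ)..s, (f t - r) := (integral_sub_const_eq hfs).symm
    _ ≤ ∫ t in (0 : ℝ)..s, (f t - r)⁺ :=
        intervalIntegral.integral_mono_on hs.1 (hfs.sub intervalIntegrable_const)
          (intervalIntegrable_posPart (hfs.sub intervalIntegrable_const))
          fun t _ => le_posPart _
    _ ≤ ∫ t in (0 : ℝ)..T, (f t - r)⁺ :=
        intervalIntegral.integral_mono_interval le_rfl hs.1 hs.2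
          (Eventually.of_forall fun t => posPart_nonneg _)
          (intervalIntegrable_posPart (hf.sub intervalIntegrable_const))

theorem integral_posPart_sub_eq (hf : IntervalIntegrable f volume 0 T) (hs : s ∈ Icc 0 T)
    (hlow : ∀ t ∈ Ioo 0 s, r ≤ f t) (hhigh : ∀ t ∈ Ioo s T, f t ≤ r) :
    ∫ t in (0 : ℝ)..T, (f t - r)⁺ = (∫ t in (0 : ℝ)..s, f t) - r * s := by
  have hfs : IntervalIntegrable f volume 0 s :=
    hf.mono_set (uIcc_subset_uIcc_left (Icc_subset_uIcc hs))
  have hfsT : IntervalIntegrable f volume s T :=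
    hf.mono_set (uIcc_subset_uIcc_right (Icc_subset_uIcc hs))
  have hleft : ∫ t in (0 : ℝ)..s, (f t - r)⁺ = ∫ t in (0 : ℝ)..s, (f t - r) :=
    intervalIntegral.integral_congr_Ioo_of_le hs.1 fun t ht =>
      posPart_of_nonneg (sub_nonneg.2 (hlow t ht))
  have hright : ∫ t in s..T, (f t - r)⁺ = ∫ _ in s..T, (0 : ℝ) :=
    intervalIntegral.integral_congr_Ioo_of_le hs.2 fun t ht =>
      posPart_of_nonpos (sub_nonpos.2 (hhigh t ht))
  rw [← intervalIntegral.integral_add_adjacent_intervals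
    (intervalIntegrable_posPart (hfs.sub intervalIntegrable_const))
    (intervalIntegrable_posPart (hfsT.sub intervalIntegrable_const)), hleft, hright,
    intervalIntegral.integral_zero, add_zero, integral_sub_const_eq hfs]

theorem exists_crossing_of_antitoneOn (hf : AntitoneOn f (Ico 0 T)) (hT : 0 ≤ T) (r : ℝ) :
    ∃ s ∈ Icc 0 T, (∀ t ∈ Ioo 0 s, r ≤ f t) ∧ ∀ t ∈ Ioo s T, f t ≤ r := by
  set S : Set ℝ := insert 0 {t ∈ Ico 0 T | r ≤ f t}
  have hST : ∀ t ∈ S, t ≤ T := by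
    rintro t (rfl | ht)
    exacts [hT, ht.1.2.le]
  have hbdd : BddAbove S := ⟨T, hST⟩
  have h0 : 0 ∈ S := mem_insert _ _
  refine ⟨sSup S, ⟨le_csSup hbdd h0, csSup_le ⟨0, h0⟩ hST⟩, fun t ht => ?_, fun t ht => ?_⟩
  · obtain ⟨u, hu, htu⟩ := exists_lt_of_lt_csSup ⟨0, h0⟩ ht.2
    rcases hu with rfl | hu
    · exact absurd htu ht.1.not_gt
    · exact hu.2.trans (hf ⟨ht.1.le, htu.trans hu.1.2⟩ hu.1 htu.le)
  · by_contra! hr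
    have htS : t ∈ S := mem_insert_of_mem _ ⟨⟨(le_csSup hbdd h0).trans ht.1.le, ht.2⟩, hr.le⟩
    exact ht.1.not_ge (le_csSup hbdd htS)

theorem integral_le_integral_of_forall_Ico (hf : IntervalIntegrable f volume 0 T)
    (hg : IntervalIntegrable g volume 0 T) (hT : 0 < T)
    (h : ∀ s ∈ Ico 0 T, ∫ t in (0 : ℝ)..s, f t ≤ ∫ t in (0 : ℝ)..s, g t) (hs : s ∈ Icc 0 T) :
    ∫ t in (0 : ℝ)..s, f t ≤ ∫ t in (0 : ℝ)..s, g t := by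
  have hclosure : closure (Ico 0 T) = uIcc 0 T := by rw [closure_Ico hT.ne, uIcc_of_le hT.le]
  refine le_on_closure h ?_ ?_ (hclosure ▸ Icc_subset_uIcc hs)
  all_goals
    rw [hclosure]
    exact intervalIntegral.continuousOn_primitive_interval' ‹_› left_mem_uIcc

theorem forall_integral_le_iff_forall_integral_posPart_le (hT : 0 < T)
    (hf : AntitoneOn f (Ico 0 T)) (hg : AntitoneOn g (Ico 0 T))
    (hfi : IntervalIntegrable f volume 0 T) (hgi : IntervalIntegrable g volume 0 T) :
    (∀ s ∈ Ico 0 T, ∫ t in (0 : ℝ)..s, f t ≤ ∫ t in (0 : ℝ)..s, g t) ↔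
      ∀ r, ∫ t in (0 : ℝ)..T, (f t - r)⁺ ≤ ∫ t in (0 : ℝ)..T, (g t - r)⁺ := by
  refine ⟨fun h r => ?_, fun h s hs => ?_⟩
  · obtain ⟨s, hs, hlow, hhigh⟩ := exists_crossing_of_antitoneOn hf hT.le r
    calc ∫ t in (0 : ℝ)..T, (f t - r)⁺
        = (∫ t in (0 : ℝ)..s, f t) - r * s := integral_posPart_sub_eq hfi hs hlow hhigh
      _ ≤ (∫ t in (0 : ℝ)..s, g t) - r * s :=
          sub_le_sub_right (integral_le_integral_of_forall_Ico hfi hgi hT h hs) _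
      _ ≤ ∫ t in (0 : ℝ)..T, (g t - r)⁺ := integral_sub_mul_le_integral_posPart hgi hs r
  · have hs' := Ico_subset_Icc_self hs
    have hlow (t : ℝ) (ht : t ∈ Ioo 0 s) : g s ≤ g t :=
      hg ⟨ht.1.le, ht.2.trans hs.2⟩ hs ht.2.le
    have hhigh (t : ℝ) (ht : t ∈ Ioo s T) : g t ≤ g s :=
      hg hs ⟨hs.1.trans ht.1.le, ht.2⟩ ht.1.le
    refine (sub_le_sub_iff_right (g s * s)).1 ?_
    calc (∫ t in (0 : ℝ)..s, f t) - g s * s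
        ≤ ∫ t in (0 : ℝ)..T, (f t - g s)⁺ := integral_sub_mul_le_integral_posPart hfi hs' _
      _ ≤ ∫ t in (0 : ℝ)..T, (g t - g s)⁺ := h (g s)
      _ = (∫ t in (0 : ℝ)..s, g t) - g s * s := integral_posPart_sub_eq hgi hs' hlow hhigh

end Majorization

section Quantile

/-- `F` is the distribution function of a probability measure carried by `[m, M]`. -/
structure IsDistributionOn (F : ℝ → ℝ) (m M : ℝ) : Prop where
  mono : Monotone F
  eq_zero_of_lt : ∀ s < m, F s = 0
  eq_one_of_le : ∀ s, M ≤ s → F s = 1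
  rightCont : ∀ s, ContinuousWithinAt F (Ici s) s

/-- The quantile function of the distribution function `F`, arranged in decreasing order, of
which `spectralScale τ e` is by definition the case `F s = re τ(e s)`. If `F ≥ 0`, its value for
`t ≥ 1` is the junk `sInf univ = 0`. -/
noncomputable def decreasingQuantile (F : ℝ → ℝ) (t : ℝ) : ℝ :=
  sInf {s : ℝ | 1 - F s ≤ t}

namespace IsDistributionOn

variable {F : ℝ → ℝ} {m M t : ℝ}

theorem one_sub_mem_Icc (hF : IsDistributionOn F m M) (r : ℝ) : 1 - F r ∈ Icc (0 : ℝ) 1 := by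
  have hlow := hF.mono (min_le_left r (m - 1))
  have hhigh := hF.mono (le_max_left r M)
  rw [hF.eq_zero_of_lt _ (min_lt_of_right_lt (sub_one_lt m))] at hlow
  rw [hF.eq_one_of_le _ (le_max_right r M)] at hhigh
  exact ⟨sub_nonneg.2 hhigh, sub_le_self 1 hlow⟩

theorem decreasingQuantile_le_iff (hF : IsDistributionOn F m M) (ht : t ∈ Ico (0 : ℝ) 1)
    (r : ℝ) : decreasingQuantile F t ≤ r ↔ 1 - F r ≤ t := by
  have hbdd : BddBelow {s : ℝ | 1 - F s ≤ t} := by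
    refine ⟨m, fun s (hs : 1 - F s ≤ t) => ?_⟩
    by_contra! hsm
    linarith [hF.eq_zero_of_lt s hsm, ht.2]
  have hne : {s : ℝ | 1 - F s ≤ t}.Nonempty :=
    ⟨M, by simpa [hF.eq_one_of_le M le_rfl] using ht.1⟩
  refine ⟨fun h => ?_, fun h => csInf_le hbdd h⟩
  have hgt (u : ℝ) (hu : u ∈ Ioi r) : 1 - F u ≤ t := by
    obtain ⟨s, hs, hsu⟩ := exists_lt_of_csInf_lt hne (h.trans_lt hu)
    exact (sub_le_sub_left (hF.mono hsu.le) 1).trans hs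
  have hlim : Tendsto (fun u => 1 - F u) (𝓝[>] r) (𝓝 (1 - F r)) :=
    ((hF.rightCont r).mono Ioi_subset_Ici_self).tendsto.const_sub 1
  exact le_of_tendsto hlim (eventually_of_mem self_mem_nhdsWithin hgt)

theorem antitoneOn_decreasingQuantile (hF : IsDistributionOn F m M) :
    AntitoneOn (decreasingQuantile F) (Ico 0 1) := fun _ ht _ ht' htt' =>
  (hF.decreasingQuantile_le_iff ht' _).2 <|
    ((hF.decreasingQuantile_le_iff ht _).1 le_rfl).trans htt'

theorem decreasingQuantile_mem_Icc (hF : IsDistributionOn F m M) (ht : t ∈ Ico (0 : ℝ) 1) :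
    decreasingQuantile F t ∈ Icc m M := by
  refine ⟨?_, (hF.decreasingQuantile_le_iff ht M).2 ?_⟩
  · by_contra! hlt
    have := (hF.decreasingQuantile_le_iff ht _).1 le_rfl
    linarith [hF.eq_zero_of_lt _ hlt, ht.2]
  · linarith [hF.eq_one_of_le M le_rfl, ht.1]

theorem intervalIntegrable_decreasingQuantile (hF : IsDistributionOn F m M) :
    IntervalIntegrable (decreasingQuantile F) volume 0 1 := by
  rw [intervalIntegrable_iff_integrableOn_Ico_of_le zero_le_one]
  have hmeas := aemeasurable_restrict_of_antitoneOn (μ := volume) measurableSet_Ico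
    hF.antitoneOn_decreasingQuantile
  refine IntegrableOn.of_bound (by simp) hmeas.aestronglyMeasurable (max |m| |M|) ?_
  filter_upwards [ae_restrict_mem measurableSet_Ico] with t ht
  obtain ⟨hm, hM⟩ := hF.decreasingQuantile_mem_Icc ht
  exact abs_le_max_abs_abs hm hM

theorem integral_posPart_decreasingQuantile_sub (hF : IsDistributionOn F m M) (r : ℝ) :
    ∫ t in (0 : ℝ)..1, (decreasingQuantile F t - r)⁺ =
      (∫ t in (0 : ℝ)..(1 - F r), decreasingQuantile F t) - r * (1 - F r) := by
  have hs := hF.one_sub_mem_Icc r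
  refine integral_posPart_sub_eq hF.intervalIntegrable_decreasingQuantile hs
    (fun t ht => ?_) fun t ht => ?_
  · by_contra! hlt
    exact ht.2.not_ge ((hF.decreasingQuantile_le_iff ⟨ht.1.le, ht.2.trans_le hs.2⟩ r).1 hlt.le)
  · exact (hF.decreasingQuantile_le_iff ⟨hs.1.trans ht.1.le, ht.2⟩ r).2 ht.1.le

theorem eq_integral_posPart_decreasingQuantile_sub (hF : IsDistributionOn F m M) {φ : ℝ → ℝ}
    (hM : φ M = 0) (hφ : ∀ r r', (r' - r) * (1 - F r') ≤ φ r - φ r') (r : ℝ) :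
    φ r = ∫ t in (0 : ℝ)..1, (decreasingQuantile F t - r)⁺ := by
  set ψ : ℝ → ℝ := fun r => ∫ t in (0 : ℝ)..1, (decreasingQuantile F t - r)⁺ with hψ_def
  have hψ (r r' : ℝ) : (r' - r) * (1 - F r') ≤ ψ r - ψ r' := by
    have hle := integral_sub_mul_le_integral_posPart hF.intervalIntegrable_decreasingQuantile
      (hF.one_sub_mem_Icc r') r
    have heq := hF.integral_posPart_decreasingQuantile_sub r'
    simp only [hψ_def]
    linarith
  have hψM : ψ M = 0 := by
    simp [hψ_def, hF.integral_posPart_decreasingQuantile_sub, hF.eq_one_of_le M le_rfl]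
  have hconst : φ r - ψ r = φ M - ψ M :=
    eq_of_forall_sub_le_mul_sub (D := fun r => φ r - ψ r) (F := F)
      (fun r r' => by linarith [hφ r r', hψ r' r]) r M
  rwa [hM, hψM, sub_self, sub_eq_zero] at hconst

end IsDistributionOn

end Quantile

end RealAnalysis

section LinearFunctional

open Set

variable {C D F G : Type*} [CStarAlgebra C] [CStarAlgebra D]

theorem posPart_sub_smul_one_eq_cfc {a : C} (ha : IsSelfAdjoint a) (r : ℝ) :
    (a - r • (1 : C))⁺ = cfc (fun x : ℝ => (x - r)⁺) a := by
  have hsub : a - r • (1 : C) = cfc (fun x : ℝ => x - r) a := by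
    rw [cfc_sub _ _ a, cfc_id' ℝ a, cfc_const r a, Algebra.algebraMap_eq_smul_one]
  rw [CFC.posPart_def, cfcₙ_eq_cfc, hsub]
  exact (cfc_comp (fun x : ℝ => x⁺) (fun x : ℝ => x - r) a).symm

variable [FunLike F C ℂ] [LinearMapClass F ℂ C ℂ] [FunLike G D ℂ] [LinearMapClass G ℂ D ℂ]
  {τ : F} {σ : G} {a : C} {b : D}

theorem re_map_cfc_add_const_mul (τ : F) {f g : ℝ → ℝ}
    (hf : ContinuousOn f (spectrum ℝ a)) (hg : ContinuousOn g (spectrum ℝ a)) (k : ℝ) :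
    (τ (cfc (fun x => f x + k * g x) a)).re = (τ (cfc f a)).re + k * (τ (cfc g a)).re := by
  rw [cfc_add a f (fun x => k * g x) hf (hg.const_smul k), cfc_const_mul k g a hg, map_add,
    Complex.add_re, ← Complex.coe_smul k, map_smul, smul_eq_mul, Complex.re_ofReal_mul]

theorem re_map_cfc_affine (hτ : τ 1 = 1) (ha : IsSelfAdjoint a) (p q : ℝ) :
    (τ (cfc (fun x => p + q * x) a)).re = p + q * (τ a).re := by
  rw [re_map_cfc_add_const_mul τ continuousOn_const (continuousOn_id' _) q, cfc_id' ℝ a,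
    cfc_const p a, Algebra.algebraMap_eq_smul_one, ← Complex.coe_smul p, map_smul, hτ]
  simp

theorem IsConvexPolygonal.re_map_cfc_le {g : ℝ → ℝ} (hg : IsConvexPolygonal g) (hτ : τ 1 = 1)
    (hσ : σ 1 = 1) (ha : IsSelfAdjoint a) (hb : IsSelfAdjoint b) (hab : τ a = σ b)
    (hinge : ∀ r, (τ (cfc (fun x : ℝ => (x - r)⁺) a)).re ≤
      (σ (cfc (fun x : ℝ => (x - r)⁺) b)).re) :
    (τ (cfc g a)).re ≤ (σ (cfc g b)).re := by
  induction hg with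
  | affine p q => rw [re_map_cfc_affine hτ ha, re_map_cfc_affine hσ hb, hab]
  | add_hinge hg hk r ih =>
    have hgc := hg.continuous
    have hrc := continuous_hinge r
    rw [re_map_cfc_add_const_mul τ hgc.continuousOn hrc.continuousOn,
      re_map_cfc_add_const_mul σ hgc.continuousOn hrc.continuousOn]
    exact add_le_add ih (mul_le_mul_of_nonneg_left (hinge r) hk)

theorem map_eq_of_forall_convexOn (ha : IsSelfAdjoint a) (hb : IsSelfAdjoint b)
    (h : ∀ f : ℝ → ℝ, ConvexOn ℝ univ f → τ (cfc f a) ≤ σ (cfc f b)) : τ a = σ b := by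
  have hle := h _ (convexOn_id convex_univ)
  have hge := h (fun x => -id x) (concaveOn_id convex_univ).neg
  rw [cfc_id ℝ a, cfc_id ℝ b] at hle
  rw [cfc_neg, cfc_neg, cfc_id ℝ a, cfc_id ℝ b, map_neg, map_neg, neg_le_neg_iff] at hge
  exact le_antisymm hle hge

end LinearFunctional

section PositiveFunctional

open Set

variable {B : Type*} [CStarAlgebra B] [PartialOrder B] [StarOrderedRing B]

theorem mul_le_posPart_of_commute {a p : A} (ha : IsSelfAdjoint a) (hp : IsStarProjection p)
    (hap : Commute a p) : a * p ≤ a⁺ := by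
  have hpos : 0 ≤ a⁺ * (1 - p) :=
    ((Commute.one_right _).sub_right (hap.cfcₙ_real _)).mul_nonneg (CFC.posPart_nonneg a)
      hp.one_sub.nonneg
  have hneg : 0 ≤ a⁻ * p := (hap.cfcₙ_real _).mul_nonneg (CFC.negPart_nonneg a) hp.nonneg
  calc a * p = (a⁺ - a⁻) * p := by rw [CFC.posPart_sub_negPart a ha]
    _ = a⁺ - (a⁺ * (1 - p) + a⁻ * p) := by noncomm_ring
    _ ≤ a⁺ := sub_le_self _ (add_nonneg hpos hneg)

theorem im_map_eq_zero_of_isSelfAdjoint (τ : A →ₚ[ℂ] ℂ) {x : A} (hx : IsSelfAdjoint x) :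
    (τ x).im = 0 :=
  Complex.conj_eq_iff_im.1 (hx.map' τ)

theorem map_le_map_iff_re_le (τ : A →ₚ[ℂ] ℂ) (σ : B →ₚ[ℂ] ℂ) {x : A} {y : B}
    (hx : IsSelfAdjoint x) (hy : IsSelfAdjoint y) : τ x ≤ σ y ↔ (τ x).re ≤ (σ y).re := by
  rw [Complex.le_def, im_map_eq_zero_of_isSelfAdjoint τ hx, im_map_eq_zero_of_isSelfAdjoint σ hy,
    and_iff_left rfl]

theorem re_map_cfc_le_add {τ : A →ₚ[ℂ] ℂ} (hτ : τ 1 = 1) {a : A} (ha : IsSelfAdjoint a)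
    {f g : ℝ → ℝ} (hf : ContinuousOn f (spectrum ℝ a)) (hg : ContinuousOn g (spectrum ℝ a))
    {ε : ℝ} (hfg : ∀ x ∈ spectrum ℝ a, f x ≤ g x + ε) :
    (τ (cfc f a)).re ≤ (τ (cfc g a)).re + ε := by
  have hle : cfc f a ≤ cfc (fun x => g x + ε) a := cfc_mono hfg hf (hg.add continuousOn_const)
  calc (τ (cfc f a)).re
      ≤ (τ (cfc (fun x => g x + ε) a)).re := (Complex.le_def.1 (OrderHomClass.mono τ hle)).1
    _ = (τ (cfc g a)).re + ε := by
        rw [cfc_add_const ε g a hg, Algebra.algebraMap_eq_smul_one, ← Complex.coe_smul ε, map_add,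
          map_smul, hτ]
        simp

section Domination

variable {τ : A →ₚ[ℂ] ℂ} {σ : B →ₚ[ℂ] ℂ} {a : A} {b : B}

theorem re_map_cfc_le_of_convexOn (hτ : τ 1 = 1) (hσ : σ 1 = 1) (ha : IsSelfAdjoint a)
    (hb : IsSelfAdjoint b) (hab : τ a = σ b)
    (hinge : ∀ r, (τ (cfc (fun x : ℝ => (x - r)⁺) a)).re ≤
      (σ (cfc (fun x : ℝ => (x - r)⁺) b)).re)
    {s : Set ℝ} (hs : IsOpen s) (hsp : spectrum ℝ a ∪ spectrum ℝ b ⊆ s) {f : ℝ → ℝ}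
    (hf : ConvexOn ℝ s f) : (τ (cfc f a)).re ≤ (σ (cfc f b)).re := by
  obtain ⟨hsa, hsb⟩ := union_subset_iff.1 hsp
  have hfc := hf.continuousOn hs
  refine le_of_forall_pos_le_add fun ε hε => ?_
  obtain ⟨g, hg, hgf⟩ := exists_isConvexPolygonal_approx hf hs
    ((spectrum.isCompact a).union (spectrum.isCompact b)) hsp (half_pos hε)
  calc (τ (cfc f a)).re
      ≤ (τ (cfc g a)).re + ε / 2 :=
        re_map_cfc_le_add hτ ha (hfc.mono hsa) hg.continuous.continuousOn fun x hx => by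
          linarith [(abs_le.1 (hgf x (.inl hx))).1]
    _ ≤ (σ (cfc g b)).re + ε / 2 :=
        add_le_add_left (hg.re_map_cfc_le hτ hσ ha hb hab hinge) _
    _ ≤ (σ (cfc f b)).re + ε / 2 + ε / 2 :=
        add_le_add_left (re_map_cfc_le_add hσ hb hg.continuous.continuousOn (hfc.mono hsb)
          fun x hx => by linarith [(abs_le.1 (hgf x (.inr hx))).2]) _
    _ = (σ (cfc f b)).re + ε := by ring

theorem map_eq_and_hinge_le_iff_forall_convexOn (hτ : τ 1 = 1) (hσ : σ 1 = 1)
    (ha : IsSelfAdjoint a) (hb : IsSelfAdjoint b) :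
    (τ a = σ b ∧ ∀ r, (τ (cfc (fun x : ℝ => (x - r)⁺) a)).re ≤
      (σ (cfc (fun x : ℝ => (x - r)⁺) b)).re) ↔
      ∀ (c d : ℝ) (f : ℝ → ℝ), spectrum ℝ a ∪ spectrum ℝ b ⊆ Ioo c d →
        ConvexOn ℝ (Ioo c d) f → τ (cfc f a) ≤ σ (cfc f b) := by
  refine ⟨fun h c d f hsp hf => ?_, fun h => ?_⟩
  · exact (map_le_map_iff_re_le τ σ (cfc_predicate f a) (cfc_predicate f b)).2
      (re_map_cfc_le_of_convexOn hτ hσ ha hb h.1 h.2 isOpen_Ioo hsp hf)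
  · obtain ⟨R, hR⟩ := ((spectrum.isCompact (𝕜 := ℝ) a).union
      (spectrum.isCompact b)).isBounded.subset_ball 0
    rw [Real.ball_eq_Ioo] at hR
    have hconv (f : ℝ → ℝ) (hf : ConvexOn ℝ univ f) : τ (cfc f a) ≤ σ (cfc f b) :=
      h _ _ f hR (hf.subset (subset_univ _) (convex_Ioo _ _))
    exact ⟨map_eq_of_forall_convexOn ha hb hconv,
      fun r => (Complex.le_def.1 (hconv _ (convexOn_hinge r))).1⟩

end Domination

end PositiveFunctional

namespace IsSpectralResolution

section Order

variable {C : Type*} [CStarAlgebra C] [PartialOrder C] {a : C} {e : ℝ → C}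

theorem isStarProjection {τ : C →ₗ[ℂ] ℂ} (he : IsSpectralResolution τ a e) (s : ℝ) :
    IsStarProjection (e s) :=
  ⟨he.idem s, he.selfAdjoint s⟩

theorem commute_sub_smul_one_one_sub {τ : C →ₗ[ℂ] ℂ} (he : IsSpectralResolution τ a e)
    (r s : ℝ) : Commute (a - r • (1 : C)) (1 - e s) :=
  (Commute.one_right _).sub_right (Commute.sub_left (he.comm s) ((Commute.one_left _).smul_left r))

theorem isDistributionOn {τ : C →ₚ[ℂ] ℂ} (he : IsSpectralResolution τ.toLinearMap a e)
    (hτ : τ 1 = 1) : IsDistributionOn (fun s => (τ (e s)).re) (-‖a‖) ‖a‖ where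
  mono _ _ h := (Complex.le_def.1 (OrderHomClass.mono τ (he.mono h))).1
  eq_zero_of_lt s hs := by simp [he.bot s hs]
  eq_one_of_le s hs := by simp [he.top s hs, hτ]
  rightCont := he.rightCont

end Order

section StarOrder

variable {τ : A →ₗ[ℂ] ℂ} {a : A} {e : ℝ → A}

theorem isSelfAdjoint (he : IsSpectralResolution τ a e) : IsSelfAdjoint a := by
  have hle := he.below ‖a‖
  rw [he.top _ le_rfl, mul_one, Complex.coe_smul] at hle
  simpa using ((IsSelfAdjoint.all ‖a‖).smul (.one A)).sub (.of_nonneg (sub_nonneg.2 hle))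

theorem posPart_sub_smul_one_eq (he : IsSpectralResolution τ a e) (r : ℝ) :
    (a - r • (1 : A))⁺ = (a - r • (1 : A)) * (1 - e r) := by
  refine (CFC.posPart_negPart_unique (b := (a - r • (1 : A)) * (1 - e r))
    (c := -((a - r • (1 : A)) * e r)) ?_ ?_ ?_ ?_).1
  · noncomm_ring
  · have hzero : (1 - e r) * e r = 0 := IsIdempotentElem.one_sub_mul_self (he.idem r)
    rw [mul_neg, mul_assoc, ← mul_assoc (1 - e r), ← (he.commute_sub_smul_one_one_sub r r).eq,
      mul_assoc, hzero, mul_zero, mul_zero, neg_zero]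
  · simpa [sub_mul] using he.above r
  · simpa [sub_mul] using he.below r

theorem posPart_sub_add_smul_le (he : IsSpectralResolution τ a e) (r r' : ℝ) :
    (a - r' • (1 : A))⁺ + (r' - r) • (1 - e r') ≤ (a - r • (1 : A))⁺ :=
  calc (a - r' • (1 : A))⁺ + (r' - r) • (1 - e r')
      = (a - r • (1 : A)) * (1 - e r') := by
        rw [he.posPart_sub_smul_one_eq]
        simp only [sub_mul, smul_mul_assoc, one_mul, sub_smul]
        abel
    _ ≤ (a - r • (1 : A))⁺ :=
        mul_le_posPart_of_commute (he.isSelfAdjoint.sub ((IsSelfAdjoint.all r).smul (.one A)))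
          (he.isStarProjection r').one_sub (he.commute_sub_smul_one_one_sub r r')

theorem re_map_cfc_hinge_eq {τ : A →ₚ[ℂ] ℂ} (he : IsSpectralResolution τ.toLinearMap a e)
    (hτ : τ 1 = 1) (r : ℝ) : (τ (cfc (fun x : ℝ => (x - r)⁺) a)).re =
      ∫ t in (0 : ℝ)..1, (spectralScale τ.toLinearMap e t - r)⁺ := by
  rw [← posPart_sub_smul_one_eq_cfc he.isSelfAdjoint]
  refine (he.isDistributionOn hτ).eq_integral_posPart_decreasingQuantile_sub
    (φ := fun r => (τ (a - r • (1 : A))⁺).re) ?_ (fun r r' => ?_) r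
  · simp [he.posPart_sub_smul_one_eq, he.top _ le_rfl]
  · have hle := (Complex.le_def.1 (OrderHomClass.mono τ (he.posPart_sub_add_smul_le r r'))).1
    rw [map_add, ← Complex.coe_smul (r' - r), map_smul, map_sub, hτ, Complex.add_re, smul_eq_mul,
      Complex.re_ofReal_mul, Complex.sub_re, Complex.one_re] at hle
    linarith

end StarOrder

end IsSpectralResolution

theorem specMajorization_iff_convex_trace_ineq_general {B : Type*} [CStarAlgebra B]
    [PartialOrder B] [StarOrderedRing B] (τ : A →ₚ[ℂ] ℂ) (hτ : τ 1 = 1) (σ : B →ₚ[ℂ] ℂ)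
    (hσ : σ 1 = 1) {a : A} {b : B} {ea : ℝ → A} {eb : ℝ → B}
    (hea : IsSpectralResolution τ.toLinearMap a ea)
    (heb : IsSpectralResolution σ.toLinearMap b eb) :
    (τ a = σ b ∧ ∀ s ∈ Set.Ico (0 : ℝ) 1,
        ∫ t in (0 : ℝ)..s, spectralScale τ.toLinearMap ea t ≤
          ∫ t in (0 : ℝ)..s, spectralScale σ.toLinearMap eb t) ↔
      ∀ (c d : ℝ) (f : ℝ → ℝ), spectrum ℝ a ∪ spectrum ℝ b ⊆ Set.Ioo c d →
        ConvexOn ℝ (Set.Ioo c d) f → τ (cfc f a) ≤ σ (cfc f b) := by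
  have hFa := hea.isDistributionOn hτ
  have hFb := heb.isDistributionOn hσ
  have hinge : (∀ s ∈ Set.Ico (0 : ℝ) 1, ∫ t in (0 : ℝ)..s, spectralScale τ.toLinearMap ea t ≤
      ∫ t in (0 : ℝ)..s, spectralScale σ.toLinearMap eb t) ↔
      ∀ r, (τ (cfc (fun x : ℝ => (x - r)⁺) a)).re ≤ (σ (cfc (fun x : ℝ => (x - r)⁺) b)).re := by
    simp only [hea.re_map_cfc_hinge_eq hτ, heb.re_map_cfc_hinge_eq hσ]
    exact forall_integral_le_iff_forall_integral_posPart_le one_pos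
      hFa.antitoneOn_decreasingQuantile hFb.antitoneOn_decreasingQuantile
      hFa.intervalIntegrable_decreasingQuantile hFb.intervalIntegrable_decreasingQuantile
  rw [hinge]
  exact map_eq_and_hinge_le_iff_forall_convexOn hτ hσ hea.isSelfAdjoint heb.isSelfAdjoint

/-- Hiai's characterization: `a ≺ b` iff `τ(f(a)) ≤ τ(f(b))` for every function `f`
convex on an open interval containing both spectra. -/
theorem specMajorization_iff_convex_trace_ineq
    (τ : A →ₗ[ℂ] ℂ) (hτ : IsII1Trace τ) (a b : A)
    (ha : IsSelfAdjoint a) (hb : IsSelfAdjoint b)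
    (ea eb : ℝ → A) (hea : IsSpectralResolution τ a ea) (heb : IsSpectralResolution τ b eb) :
    (τ a = τ b ∧ ∀ s ∈ Set.Ico (0:ℝ) 1,
        ∫ t in (0:ℝ)..s, spectralScale τ ea t ≤ ∫ t in (0:ℝ)..s, spectralScale τ eb t) ↔
      ∀ (c d : ℝ) (f : ℝ → ℝ),
        spectrum ℝ a ∪ spectrum ℝ b ⊆ Set.Ioo c d → ConvexOn ℝ (Set.Ioo c d) f →
          τ (cfc f a) ≤ τ (cfc f b) := by
  exact specMajorization_iff_convex_trace_ineq_general (.mk₀ τ hτ.pos) hτ.normalized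
    (.mk₀ τ hτ.pos) hτ.normalized hea heb
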